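/- Assume g_i^{jk} ∈ ℝ for 0 ≤ i,j,k ≤ 2 with g_i^{jk} = g_i^{kj}, and Σ_{i,j,k=0}^2 g_i^{jk} p_i p_j p_k = 0 for every p = (p₀,p₁,p₂) ∈ ℝ³ satisfying p₀² = p₁² + p₂². Then for every pair of multi-indices α, β (over the fields Γ) there is a constant C > 0 such that for every smooth function φ̇ on (0,∞)×(ℝ²∖{0}) that is radially symmetric in x (φ̇(t,x) = ψ(t,|x|)), and every t > 0, x ≠ 0: |Σ_{i,j,k=0}^2 g_i^{jk}(∂_iΓ^αφ̇ ∂²_{jk}Γ^βφ̇)(t,x)| ≤ (C/t)( Σ_{|p|≤|α|, |q|≤|β|} |(σ₋ Γ^p∂φ̇ · ∂Γ^q∂φ̇)(t,x)| + Σ_{|p|≤|α|+1, |q|≤|β|} |(Γ^pφ̇ · ∂Γ^q∂φ̇)(t,x)| + Σ_{|p|≤|α|, |q|≤|β|+1} |(Γ^p∂φ̇ · Γ^q∂φ̇)(t,x)| ). -/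

import Mathlib

noncomputable section

open Real MeasureTheory Set

/-- A function of time `t` and space `(x, y)`. -/
abbrev F3 : Type := ℝ → ℝ → ℝ → ℝ

/-- Partial derivative in time. -/
def pt (f : F3) : F3 := fun t x y => deriv (fun s => f s x y) t
/-- Partial derivative in the first space variable. -/
def px (f : F3) : F3 := fun t x y => deriv (fun s => f t s y) x
/-- Partial derivative in the second space variable. -/
def py (f : F3) : F3 := fun t x y => deriv (fun s => f t x s) y

/-- `∂ = (∂_t, ∂_1, ∂_2)`. -/
def pdi : Fin 3 → F3 → F3 := ![pt, px, py]

/-- The scaling field `X = t∂_t + x₁∂₁ + x₂∂₂`. -/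
def Xf (f : F3) : F3 := fun t x y => t * pt f t x y + x * px f t x y + y * py f t x y
/-- The rotation field `Ω = x₁∂₂ − x₂∂₁`. -/
def Om (f : F3) : F3 := fun t x y => x * py f t x y - y * px f t x y
/-- The Lorentz boost `L₁ = t∂₁ + x₁∂_t`. -/
def L1f (f : F3) : F3 := fun t x y => t * px f t x y + x * pt f t x y
/-- The Lorentz boost `L₂ = t∂₂ + x₂∂_t`. -/
def L2f (f : F3) : F3 := fun t x y => t * py f t x y + y * pt f t x y

/-- The family `Γ = (∂_t, ∂_1, ∂_2, X)`. -/
def GammaF : Fin 4 → F3 → F3 := ![pt, px, py, Xf]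

/-- Iterated composition `Γ^α` over a word `α`. -/
def GIter : List (Fin 4) → F3 → F3
  | [], f => f
  | a :: l, f => GammaF a (GIter l f)

/-- The family `Λ = (∂_t, ∂_1, ∂_2, Ω, X, L₁, L₂)`. -/
def LamF : Fin 7 → F3 → F3 := ![pt, px, py, Om, Xf, L1f, L2f]

/-- Iterated composition `Λ^α` over a word `α`. -/
def LIter : List (Fin 7) → F3 → F3
  | [], f => f
  | a :: l, f => LamF a (LIter l f)

/-- Iterated composition `∂^β` over a word `β`. -/
def PIter : List (Fin 3) → F3 → F3
  | [], f => f
  | a :: l, f => pdi a (PIter l f)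

/-- `r = |x|`. -/
def rad (x y : ℝ) : ℝ := Real.sqrt (x ^ 2 + y ^ 2)
/-- `σ₋(t,x) = 1 + |t − |x||`. -/
def sm (t x y : ℝ) : ℝ := 1 + |t - rad x y|
/-- `σ₊(t,x) = 1 + t + |x|`. -/
def sp (t x y : ℝ) : ℝ := 1 + t + rad x y

/-- `f` is a `C^∞` function of `(t, x)`. -/
def Smooth3 (f : F3) : Prop := ContDiff ℝ (⊤ : ℕ∞) (fun p : ℝ × ℝ × ℝ => f p.1 p.2.1 p.2.2)

/-- `Z₁ = ∂₁ + (x₁/|x|)∂_t`. -/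
def Z1 (f : F3) : F3 := fun t x y => px f t x y + (x / rad x y) * pt f t x y
/-- `Z₂ = ∂₂ + (x₂/|x|)∂_t`. -/
def Z2 (f : F3) : F3 := fun t x y => py f t x y + (y / rad x y) * pt f t x y
/-- The family `Z = (Z₁, Z₂)`. -/
def Zi : Fin 2 → F3 → F3 := ![Z1, Z2]

/-- `f` is radially symmetric in the space variables. -/
def RadialF (f : F3) : Prop := ∀ t x y x' y', rad x y = rad x' y' → f t x y = f t x' y'

/-!
Let `ω = (-1, x/r, y/r)`. Every derivative splits as `∂_i = -ω_i ∂_t + Z_i`, where the good part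
`Z_i` is tangent to the outgoing light cone. Inserting this into the null form, the term in which
no factor carries a `Z_i` has the coefficient `Σ g_i^{jk} ω_i ω_j ω_k = 0`. On each remaining term
one gains `1/t`: near the cone, `t Z_i` is a combination of the scaling field `X`, the rotation `Ω`
and `(t - r) ∂` with bounded coefficients, and for `2 r ≤ t` the weight `σ₋` is itself at least
`t / 2`.

It remains to commute the fields through `Γ^α`. The brackets of `∂_i` and of `Ω` with the `Γ_a` lie
in the span of the `∂_i`. Hence, in the algebra of differential operators, `Ω Γ^w` is a combination
of words of length at most `|w| + 1`, up to the left ideal generated by `Ω`, which kills radial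
functions.
-/

open Asymptotics Submodule TopologicalSpace
open scoped ContDiff Filter

/-! ### Words in an algebra -/

section Words

variable {R A κ : Type*}

/-- The product `Γ^w = Γ_{w₁} ⋯ Γ_{wₙ}` along a word `w` in the letters `κ`. -/
def wordProd [Monoid A] (Γ : κ → A) (w : List κ) : A := (w.map Γ).prod

lemma wordProd_cons [Monoid A] (Γ : κ → A) (a : κ) (w : List κ) :
    wordProd Γ (a :: w) = Γ a * wordProd Γ w := by
  simp [wordProd]

lemma mul_pow_le_pow_mul [Monoid A] [Preorder A] [MulLeftMono A] [MulRightMono A] {a b : A}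
    (h : a * b ≤ b * a) (n : ℕ) : a * b ^ n ≤ b ^ n * a := by
  induction n with
  | zero => simp
  | succ n ih =>
    calc a * b ^ (n + 1) = a * b ^ n * b := by rw [pow_succ, mul_assoc]
      _ ≤ b ^ n * a * b := mul_le_mul_left ih b
      _ = b ^ n * (a * b) := mul_assoc _ _ _
      _ ≤ b ^ n * (b * a) := mul_le_mul_right h _
      _ = b ^ (n + 1) * a := by rw [pow_succ, mul_assoc]

variable [CommRing R] [Ring A] [Algebra R A] {Γ : κ → A}

variable (R Γ) in
/-- The span of `1` and the letters `Γ_a`. Its `n`-th power is the span of the words of length at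
most `n`, so that inclusions between products of submodules keep track of word lengths. -/
def letterSpan : Submodule R A := 1 ⊔ span R (range Γ)

lemma one_le_letterSpan : 1 ≤ letterSpan R Γ := le_sup_left

lemma letter_mem_letterSpan (a : κ) : Γ a ∈ letterSpan R Γ :=
  mem_sup_right (subset_span (mem_range_self a))

lemma wordProd_mem_letterSpan_pow {w : List κ} {n : ℕ} (hw : w.length ≤ n) :
    wordProd Γ w ∈ letterSpan R Γ ^ n := by
  refine pow_le_pow_right₀ one_le_letterSpan hw ?_
  clear hw
  induction w with
  | nil => exact one_le.1 (pow_zero _).ge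
  | cons a w ih =>
    rw [wordProd_cons, List.length_cons, pow_succ']
    exact mul_mem_mul (letter_mem_letterSpan a) ih

lemma letterSpan_pow_eq_span_wordProd (n : ℕ) :
    letterSpan R Γ ^ n = span R (wordProd Γ '' {w | w.length ≤ n}) := by
  refine le_antisymm ?_ (span_le.2 ?_)
  · induction n with
    | zero => simp [wordProd, one_eq_span]
    | succ n ih =>
      refine (pow_succ' _ n).trans_le ((mul_le_mul_right ih _).trans ?_)
      rw [letterSpan, Submodule.sup_mul, one_mul, span_mul_span]
      refine sup_le (span_mono (image_mono fun w hw => Nat.le_succ_of_le hw)) (span_mono ?_)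
      rintro _ ⟨_, ⟨a, rfl⟩, _, ⟨w, hw, rfl⟩, rfl⟩
      exact ⟨a :: w, Nat.succ_le_succ hw, wordProd_cons Γ a w⟩
  · rintro _ ⟨w, hw, rfl⟩
    exact wordProd_mem_letterSpan_pow hw

lemma span_mul_letterSpan_le {s : Set A} (h : ∀ d ∈ s, ∀ a, ⁅d, Γ a⁆ ∈ span R s) :
    span R s * letterSpan R Γ ≤ letterSpan R Γ * span R s := by
  rw [letterSpan, Submodule.mul_sup, mul_one, span_mul_span]
  refine sup_le (le_mul_of_one_le_left' le_sup_left) (span_le.2 ?_)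
  rintro _ ⟨d, hd, _, ⟨a, rfl⟩, rfl⟩
  have swap : d * Γ a = Γ a * d + 1 * ⁅d, Γ a⁆ := by rw [Ring.lie_def]; noncomm_ring
  change d * Γ a ∈ _
  rw [swap]
  exact add_mem (mul_mem_mul (letter_mem_letterSpan a) (subset_span hd))
    (mul_mem_mul (one_le.1 one_le_letterSpan) (h d hd a))

lemma mul_pow_mul_le_sup {G N M Z : Submodule R A} (hNG : N * G ≤ G * N)
    (hNM : N * M ≤ G * M ⊔ ⊤ * Z) (n : ℕ) : N * G ^ n * M ≤ G ^ (n + 1) * M ⊔ ⊤ * Z :=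
  calc N * G ^ n * M ≤ G ^ n * N * M := mul_le_mul_left (mul_pow_le_pow_mul hNG n) M
    _ = G ^ n * (N * M) := mul_assoc _ _ _
    _ ≤ G ^ n * (G * M ⊔ ⊤ * Z) := mul_le_mul_right hNM _
    _ = G ^ (n + 1) * M ⊔ G ^ n * ⊤ * Z := by rw [Submodule.mul_sup, pow_succ, mul_assoc, mul_assoc]
    _ ≤ G ^ (n + 1) * M ⊔ ⊤ * Z := sup_le_sup_left (mul_le_mul_left le_top Z) _

end Words

section Commutation

variable {R A ι κ : Type*} [CommRing R] [Ring A] [Algebra R A] {D : ι → A} {Γ : κ → A} {Ω : A}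

lemma mem_letterSpan_of_range_subset (hDΓ : range D ⊆ range Γ) (i : ι) : D i ∈ letterSpan R Γ :=
  mem_sup_right (subset_span (hDΓ (mem_range_self i)))

lemma lie_mem_of_range_subset (hDΓ : range D ⊆ range Γ) {N : Submodule R A}
    (hΩ : ∀ a, ⁅Ω, Γ a⁆ ∈ N) (i : ι) : ⁅Ω, D i⁆ ∈ N := by
  obtain ⟨a, ha⟩ := hDΓ (mem_range_self i)
  exact ha ▸ hΩ a

lemma span_range_mul_letterSpan_le (hD : ∀ i a, ⁅D i, Γ a⁆ ∈ span R (range D)) :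
    span R (range D) * letterSpan R Γ ≤ letterSpan R Γ * span R (range D) :=
  span_mul_letterSpan_le (forall_mem_range.2 hD)

lemma span_insert_mul_letterSpan_le (hD : ∀ i a, ⁅D i, Γ a⁆ ∈ span R (range D))
    (hΩ : ∀ a, ⁅Ω, Γ a⁆ ∈ span R (range D)) :
    span R (insert Ω (range D)) * letterSpan R Γ ≤
      letterSpan R Γ * span R (insert Ω (range D)) := by
  refine span_mul_letterSpan_le ?_
  rintro _ (rfl | ⟨i, rfl⟩) a <;> refine span_mono (subset_insert _ _) ?_
  exacts [hΩ a, hD i a]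

lemma span_insert_mul_one_le (hDΓ : range D ⊆ range Γ) :
    span R (insert Ω (range D)) * 1 ≤ letterSpan R Γ * 1 ⊔ ⊤ * span R {Ω} := by
  rw [mul_one, mul_one, span_le]
  rintro T (hT | ⟨i, rfl⟩)
  · rw [hT]
    refine mem_sup_right ?_
    simpa only [one_mul] using mul_mem_mul (mem_top (x := 1)) (mem_span_singleton_self (R := R) Ω)
  · exact mem_sup_left (mem_letterSpan_of_range_subset hDΓ i)

lemma span_insert_mul_span_range_le (hDΓ : range D ⊆ range Γ)
    (hΩ : ∀ a, ⁅Ω, Γ a⁆ ∈ span R (range D)) :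
    span R (insert Ω (range D)) * span R (range D) ≤
      letterSpan R Γ * span R (range D) ⊔ ⊤ * span R {Ω} := by
  rw [span_mul_span, span_le]
  rintro _ ⟨T, hT | ⟨i, rfl⟩, _, ⟨k, rfl⟩, rfl⟩
  · rw [hT]
    have swap : Ω * D k = 1 * ⁅Ω, D k⁆ + D k * Ω := by rw [Ring.lie_def]; noncomm_ring
    change Ω * D k ∈ _
    rw [swap]
    exact add_mem
      (mem_sup_left (mul_mem_mul (one_le.1 one_le_letterSpan) (lie_mem_of_range_subset hDΓ hΩ k)))
      (mem_sup_right (mul_mem_mul mem_top (mem_span_singleton_self _)))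
  · exact mem_sup_left
      (mul_mem_mul (mem_letterSpan_of_range_subset hDΓ i) (subset_span (mem_range_self k)))

lemma mul_wordProd_mem (hD : ∀ i a, ⁅D i, Γ a⁆ ∈ span R (range D)) (i : ι) (w : List κ) :
    D i * wordProd Γ w ∈ letterSpan R Γ ^ w.length * span R (range D) :=
  mul_pow_le_pow_mul (span_range_mul_letterSpan_le hD) _
    (mul_mem_mul (subset_span (mem_range_self i)) (wordProd_mem_letterSpan_pow le_rfl))

lemma letter_mul_mul_wordProd_mem (hD : ∀ i a, ⁅D i, Γ a⁆ ∈ span R (range D)) (a : κ) (i : ι)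
    (w : List κ) :
    Γ a * (D i * wordProd Γ w) ∈ letterSpan R Γ ^ (w.length + 1) * span R (range D) := by
  rw [pow_succ', mul_assoc]
  exact mul_mem_mul (letter_mem_letterSpan a) (mul_wordProd_mem hD i w)

lemma mul_wordProd_mem_sup (hDΓ : range D ⊆ range Γ)
    (hD : ∀ i a, ⁅D i, Γ a⁆ ∈ span R (range D)) (hΩ : ∀ a, ⁅Ω, Γ a⁆ ∈ span R (range D))
    (w : List κ) :
    Ω * wordProd Γ w ∈ letterSpan R Γ ^ (w.length + 1) ⊔ ⊤ * span R {Ω} := by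
  have mem := mul_pow_mul_le_sup (span_insert_mul_letterSpan_le hD hΩ) (span_insert_mul_one_le hDΓ)
    w.length (mul_mem_mul (mul_mem_mul (subset_span (mem_insert _ _))
      (wordProd_mem_letterSpan_pow le_rfl)) (one_le.1 le_rfl))
  rwa [mul_one, mul_one] at mem

lemma mul_mul_wordProd_mem_sup (hDΓ : range D ⊆ range Γ)
    (hD : ∀ i a, ⁅D i, Γ a⁆ ∈ span R (range D)) (hΩ : ∀ a, ⁅Ω, Γ a⁆ ∈ span R (range D)) (i : ι)
    (w : List κ) :
    Ω * (D i * wordProd Γ w) ∈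
      letterSpan R Γ ^ (w.length + 1) * span R (range D) ⊔ ⊤ * span R {Ω} := by
  refine mul_pow_mul_le_sup (span_insert_mul_letterSpan_le hD hΩ)
    (span_insert_mul_span_range_le hDΓ hΩ) w.length ?_
  rw [mul_assoc]
  exact mul_mem_mul (subset_span (mem_insert _ _)) (mul_wordProd_mem hD i w)

end Commutation

section WordSum

variable {κ : Type*} [Fintype κ]

/-- The sum of `h w` over the words `w` of length at most `n`. -/
def wordSum (n : ℕ) (h : List κ → ℝ) : ℝ :=
  ∑ b ∈ Finset.range (n + 1), ∑ w : Fin b → κ, h (List.ofFn w)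

/-- The sum of `h v w` over the words `v` and `w` of length at most `n` and `m`, arranged as on the
right-hand side of the null form estimate. -/
def wordSum₂ (n m : ℕ) (h : List κ → List κ → ℝ) : ℝ :=
  ∑ b ∈ Finset.range (n + 1), ∑ c ∈ Finset.range (m + 1),
    ∑ v : Fin b → κ, ∑ w : Fin c → κ, h (List.ofFn v) (List.ofFn w)

lemma wordSum_mul_wordSum (n m : ℕ) (h k : List κ → ℝ) :
    wordSum n h * wordSum m k = wordSum₂ n m fun v w => h v * k w := by
  simp only [wordSum, wordSum₂, Finset.sum_mul_sum]

lemma mul_wordSum (c : ℝ) (n : ℕ) (h : List κ → ℝ) :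
    c * wordSum n h = wordSum n fun w => c * h w := by
  simp only [wordSum, Finset.mul_sum]

lemma wordSum_nonneg (n : ℕ) {h : List κ → ℝ} (hh : ∀ w, 0 ≤ h w) : 0 ≤ wordSum n h :=
  Finset.sum_nonneg fun _ _ => Finset.sum_nonneg fun _ _ => hh _

lemma le_wordSum {n : ℕ} {h : List κ → ℝ} (hh : ∀ w, 0 ≤ h w) {w : List κ} (hw : w.length ≤ n) :
    h w ≤ wordSum n h :=
  calc h w = h (List.ofFn w.get) := by rw [List.ofFn_get]
    _ ≤ ∑ v : Fin w.length → κ, h (List.ofFn v) :=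
      Finset.single_le_sum (f := fun v : Fin w.length → κ => h (List.ofFn v))
        (fun v _ => hh _) (Finset.mem_univ w.get)
    _ ≤ wordSum n h :=
      Finset.single_le_sum (f := fun b => ∑ v : Fin b → κ, h (List.ofFn v))
        (fun b _ => Finset.sum_nonneg fun v _ => hh _) (Finset.mem_range.2 (Nat.lt_succ_of_le hw))

variable {A X : Type*} [Ring A] [Algebra ℝ A] {Γ : κ → A} {s : Set A} {n : ℕ} {T : A}
  {l : Filter X} {ev : X → A →ₗ[ℝ] ℝ} {h : X → List κ → ℝ}

lemma isBigO_wordSum_of_mem (hh : ∀ x w, 0 ≤ h x w)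
    (hev : ∀ x w, ∀ b ∈ s, |ev x (wordProd Γ w * b)| ≤ h x w)
    (hT : T ∈ letterSpan ℝ Γ ^ n * span ℝ s) :
    (fun x => ev x T) =O[l] fun x => wordSum n (h x) := by
  rw [letterSpan_pow_eq_span_wordProd, span_mul_span] at hT
  induction hT using span_induction with
  | mem T hT =>
    obtain ⟨_, ⟨w, hw, rfl⟩, b, hb, rfl⟩ := hT
    exact .of_norm_le fun x => (hev x w b hb).trans (le_wordSum (hh x) hw)
  | zero => simpa only [map_zero] using isBigO_zero _ l
  | add S T _ _ hS hT => simpa only [map_add] using hS.add hT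
  | smul c T _ hT => simpa only [map_smul, smul_eq_mul] using hT.const_mul_left c

lemma isBigO_wordSum_of_mem_sup {K : Submodule ℝ A} (hh : ∀ x w, 0 ≤ h x w)
    (hev : ∀ x w, ∀ b ∈ s, |ev x (wordProd Γ w * b)| ≤ h x w)
    (hK : ∀ᶠ x in l, ∀ S ∈ K, ev x S = 0)
    (hT : T ∈ letterSpan ℝ Γ ^ n * span ℝ s ⊔ K) :
    (fun x => ev x T) =O[l] fun x => wordSum n (h x) := by
  obtain ⟨T', hT', S, hS, rfl⟩ := mem_sup.1 hT
  refine (isBigO_wordSum_of_mem hh hev hT').congr' (hK.mono fun x hx => ?_) .rfl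
  simp only [map_add, hx S hS, add_zero]

end WordSum

/-! ### Smooth functions on an open set and their derivations -/

section SmoothFunctions

variable {E : Type*} [NormedAddCommGroup E] [NormedSpace ℝ E]

/-- The smooth functions on the open set `U`, extended by zero. With this convention two elements
that agree on `U` are equal, and differential operators are honest endomorphisms. -/
def smoothSubmodule (U : Opens E) : Submodule ℝ (E → ℝ) where
  carrier := {f | ContDiffOn ℝ ∞ f U ∧ ∀ p ∉ U, f p = 0}
  zero_mem' := ⟨contDiffOn_const, fun _ _ => rfl⟩
  add_mem' hf hg := ⟨hf.1.add hg.1, fun p hp => by simp [hf.2 p hp, hg.2 p hp]⟩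
  smul_mem' c f hf := ⟨hf.1.const_smul c, fun p hp => by simp [hf.2 p hp]⟩

/-- The type of smooth functions on `U`, the space on which differential operators act. It hides
the submodule from instance search, which is slow on endomorphisms of a submodule of functions. -/
def SmoothFun (U : Opens E) : Type _ := smoothSubmodule U

namespace SmoothFun

variable {U : Opens E} {V W Z : E → E} {p : E}

instance : AddCommGroup (SmoothFun U) := inferInstanceAs (AddCommGroup (smoothSubmodule U))

instance : Module ℝ (SmoothFun U) := inferInstanceAs (Module ℝ (smoothSubmodule U))

@[simp] lemma coe_add (f g : SmoothFun U) : (f + g).1 = f.1 + g.1 := rfl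

@[simp] lemma coe_sub (f g : SmoothFun U) : (f - g).1 = f.1 - g.1 := rfl

@[simp] lemma coe_smul (c : ℝ) (f : SmoothFun U) : (c • f).1 = c • f.1 := rfl

@[ext]
lemma ext {f g : SmoothFun U} (h : ∀ p ∈ U, f.1 p = g.1 p) : f = g := by
  refine Subtype.ext (funext fun p => ?_)
  by_cases hp : p ∈ U
  · exact h p hp
  · rw [f.2.2 p hp, g.2.2 p hp]

lemma contDiffAt (f : SmoothFun U) (hp : p ∈ U) : ContDiffAt ℝ ∞ f.1 p :=
  f.2.1.contDiffAt (U.isOpen.mem_nhds hp)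

lemma differentiableAt (f : SmoothFun U) (hp : p ∈ U) : DifferentiableAt ℝ f.1 p :=
  (f.contDiffAt hp).differentiableAt (by simp)

/-- The element of `SmoothFun U` given by a function that is smooth on `U`. -/
def restrict (φ : E → ℝ) (hφ : ContDiffOn ℝ ∞ φ U) : SmoothFun U :=
  ⟨(U : Set E).indicator φ, hφ.congr fun _ hp => indicator_of_mem hp φ,
    fun _ hp => indicator_of_notMem hp φ⟩

lemma restrict_apply {φ : E → ℝ} (hφ : ContDiffOn ℝ ∞ φ U) (hp : p ∈ U) :
    (restrict φ hφ).1 p = φ p :=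
  indicator_of_mem hp φ

lemma contDiffOn_fderiv_apply (hV : ContDiff ℝ ∞ V) (f : SmoothFun U) :
    ContDiffOn ℝ ∞ (fun p => fderiv ℝ f.1 p (V p)) U :=
  (f.2.1.fderiv_of_isOpen U.isOpen (by simp)).clm_apply hV.contDiffOn

/-- Differentiation of smooth functions along a smooth vector field `V`. -/
def dirDeriv (U : Opens E) (hV : ContDiff ℝ ∞ V) : Module.End ℝ (SmoothFun U) where
  toFun f := restrict _ (contDiffOn_fderiv_apply hV f)
  map_add' f g := by
    ext p hp
    simp only [restrict_apply _ hp, coe_add, Pi.add_apply,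
      fderiv_add (f.differentiableAt hp) (g.differentiableAt hp), _root_.add_apply]
  map_smul' c f := by
    ext p hp
    simp only [restrict_apply _ hp, coe_smul, Pi.smul_apply, RingHom.id_apply,
      fderiv_const_smul (f.differentiableAt hp), _root_.smul_apply]

lemma dirDeriv_apply (hV : ContDiff ℝ ∞ V) (f : SmoothFun U) (hp : p ∈ U) :
    (dirDeriv U hV f).1 p = fderiv ℝ f.1 p (V p) :=
  restrict_apply (contDiffOn_fderiv_apply hV f) hp

lemma fderiv_dirDeriv (hV : ContDiff ℝ ∞ V) (f : SmoothFun U) (hp : p ∈ U) :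
    fderiv ℝ (dirDeriv U hV f).1 p = fderiv ℝ (fun q => fderiv ℝ f.1 q (V q)) p :=
  Filter.EventuallyEq.fderiv_eq <|
    Filter.eventually_of_mem (U.isOpen.mem_nhds hp) fun _ hq => dirDeriv_apply hV f hq

lemma lie_dirDeriv (hV : ContDiff ℝ ∞ V) (hW : ContDiff ℝ ∞ W) (hZ : ContDiff ℝ ∞ Z)
    (h : VectorField.lieBracket ℝ V W = Z) :
    ⁅dirDeriv U hV, dirDeriv U hW⁆ = dirDeriv U hZ := by
  ext f p hp
  have hbracket := VectorField.fderiv_apply_lieBracket (f.contDiffAt hp)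
    (minSmoothness_of_isRCLikeNormedField.trans_le ENat.LEInfty.out)
    (hW.differentiable (by simp) p) (hV.differentiable (by simp) p)
  simp only [Ring.lie_def, LinearMap.sub_apply, Module.End.mul_apply, coe_sub, Pi.sub_apply,
    dirDeriv_apply _ _ hp, fderiv_dirDeriv _ _ hp]
  rw [← h, hbracket]

variable (U)

/-- The derivations along constant vector fields. -/
def constDeriv : E →ₗ[ℝ] Module.End ℝ (SmoothFun U) where
  toFun v := dirDeriv U (contDiff_const (c := v))
  map_add' v w := by
    ext f p hp
    simp [dirDeriv_apply _ _ hp]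
  map_smul' c v := by
    ext f p hp
    simp [dirDeriv_apply _ _ hp]

/-- The derivation along a linear vector field. -/
def linDeriv (L : E →L[ℝ] E) : Module.End ℝ (SmoothFun U) := dirDeriv U L.contDiff

variable {U}

lemma constDeriv_apply (v : E) (f : SmoothFun U) (hp : p ∈ U) :
    (constDeriv U v f).1 p = fderiv ℝ f.1 p v :=
  dirDeriv_apply contDiff_const f hp

lemma linDeriv_apply (L : E →L[ℝ] E) (f : SmoothFun U) (hp : p ∈ U) :
    (linDeriv U L f).1 p = fderiv ℝ f.1 p (L p) :=
  dirDeriv_apply L.contDiff f hp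

lemma lie_constDeriv_constDeriv (v w : E) : ⁅constDeriv U v, constDeriv U w⁆ = 0 := by
  rw [← map_zero (constDeriv U)]
  refine lie_dirDeriv contDiff_const contDiff_const contDiff_const (funext fun p => ?_)
  simp [VectorField.lieBracket]

lemma lie_constDeriv_linDeriv (v : E) (L : E →L[ℝ] E) :
    ⁅constDeriv U v, linDeriv U L⁆ = constDeriv U (L v) := by
  refine lie_dirDeriv contDiff_const L.contDiff contDiff_const (funext fun p => ?_)
  simp [VectorField.lieBracket]

lemma lie_linDeriv_linDeriv_of_commute {L M : E →L[ℝ] E} (h : Commute L M) :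
    ⁅linDeriv U L, linDeriv U M⁆ = 0 := by
  rw [← map_zero (constDeriv U)]
  refine lie_dirDeriv L.contDiff M.contDiff contDiff_const (funext fun p => ?_)
  simpa [VectorField.lieBracket, sub_eq_zero] using (DFunLike.congr_fun h.eq p).symm

end SmoothFun

/-- The value of `T f` at `p`, as a functional of the operator `T`, for `q = (f, p)`. -/
def evalAt {U : Opens E} (q : SmoothFun U × E) : Module.End ℝ (SmoothFun U) →ₗ[ℝ] ℝ where
  toFun T := (T q.1).1 q.2
  map_add' _ _ := rfl
  map_smul' _ _ := rfl

lemma evalAt_eq_zero_of_mem_top_mul_span {U : Opens E} {D S : Module.End ℝ (SmoothFun U)}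
    {q : SmoothFun U × E} (hD : D q.1 = 0) (hS : S ∈ ⊤ * span ℝ {D}) : evalAt q S = 0 := by
  suffices ⊤ * span ℝ {D} ≤ (evalAt q).ker from this hS
  refine mul_le.2 fun T _ _ hD' => ?_
  obtain ⟨c, rfl⟩ := mem_span_singleton.1 hD'
  change (T (c • D q.1)).1 q.2 = 0
  rw [hD, smul_zero, map_zero]
  rfl

end SmoothFunctions

/-! ### Null forms at a point -/

section NullForm

section Algebra

variable {R ι : Type*} [CommRing R] (o : ι) (p : ι → R)

/-- The part of a covector `a` that is left after subtracting its component `-a_o` along `p`. For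
`p_o = -1` this is a projection along `p`. -/
def goodPart (a : ι → R) : ι → R := a + a o • p

lemma sum_nullForm_eq_sum_goodPart [Fintype ι] {g : ι → ι → ι → R}
    (hp : ∑ i, ∑ j, ∑ k, g i j k * p i * p j * p k = 0) (a : ι → R) {H : ι → ι → R}
    (hH : ∀ k, H k o = H o k) :
    ∑ i, ∑ j, ∑ k, g i j k * (a i * H k j) =
      ∑ i, ∑ j, ∑ k, g i j k * (goodPart o p a i * H k j -
        a o * p i * (goodPart o p (H k) j - p j * goodPart o p (H o) k)) := by
  have expand (i j k : ι) : g i j k * (a i * H k j) =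
      g i j k * (goodPart o p a i * H k j -
        a o * p i * (goodPart o p (H k) j - p j * goodPart o p (H o) k)) -
      a o * H o o * (g i j k * p i * p j * p k) := by
    simp only [goodPart, Pi.add_apply, Pi.smul_apply, smul_eq_mul, hH k]
    ring
  simp_rw [expand, Finset.sum_sub_distrib, ← Finset.mul_sum, hp, mul_zero, sub_zero]

end Algebra

lemma abs_sum₃_mul_le {ι : Type*} [Fintype ι] (g : ι → ι → ι → ℝ) {F : ι → ι → ι → ℝ} {K : ℝ}
    (hF : ∀ i j k, |F i j k| ≤ K) :
    |∑ i, ∑ j, ∑ k, g i j k * F i j k| ≤ (∑ i, ∑ j, ∑ k, |g i j k|) * K := by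
  simp_rw [Finset.sum_mul]
  refine (Finset.abs_sum_le_sum_abs _ _).trans (Finset.sum_le_sum fun i _ => ?_)
  refine (Finset.abs_sum_le_sum_abs _ _).trans (Finset.sum_le_sum fun j _ => ?_)
  refine (Finset.abs_sum_le_sum_abs _ _).trans (Finset.sum_le_sum fun k _ => ?_)
  rw [abs_mul]
  exact mul_le_mul_of_nonneg_left (hF i j k) (abs_nonneg _)

/-- The scaling derivative `X u` at the point `(t, x, y)`, in terms of the gradient `a` of `u`. -/
def scalingForm (t x y : ℝ) (a : Fin 3 → ℝ) : ℝ := t * a 0 + x * a 1 + y * a 2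

/-- The rotation derivative `Ω u` at the point `(t, x, y)`, in terms of the gradient `a` of `u`. -/
def rotationForm (x y : ℝ) (a : Fin 3 → ℝ) : ℝ := x * a 2 - y * a 1

/-- The covector `(-1, x/r, y/r)`, conormal to the light cone through a point with spatial part
`(x, y)`. Its `goodPart` collects the derivatives `∂_i + ω_i ∂_t` tangent to that cone. -/
def nullCovector (x y : ℝ) : Fin 3 → ℝ := ![-1, x / rad x y, y / rad x y]

variable {t x y : ℝ}

lemma rad_sq (x y : ℝ) : rad x y ^ 2 = x ^ 2 + y ^ 2 := sq_sqrt (by positivity)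

lemma rad_pos (hxy : (x, y) ≠ (0, 0)) : 0 < rad x y := by
  refine sqrt_pos.2 (lt_of_le_of_ne (by positivity) fun h => hxy ?_)
  rw [eq_comm, add_eq_zero_iff_of_nonneg (sq_nonneg x) (sq_nonneg y)] at h
  simpa using h

lemma sm_nonneg (t x y : ℝ) : 0 ≤ sm t x y := add_nonneg zero_le_one (abs_nonneg _)

lemma nullCovector_null (hxy : (x, y) ≠ (0, 0)) :
    nullCovector x y 0 ^ 2 = nullCovector x y 1 ^ 2 + nullCovector x y 2 ^ 2 := by
  have hr := (rad_pos hxy).ne'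
  simp only [nullCovector, Matrix.cons_val]
  field_simp
  linarith [rad_sq x y]

lemma abs_nullCovector_le_one (x y : ℝ) (i : Fin 3) : |nullCovector x y i| ≤ 1 := by
  have abs_div_rad_le {z : ℝ} (hz : z ^ 2 ≤ x ^ 2 + y ^ 2) : |z / rad x y| ≤ 1 := by
    rw [abs_div]
    exact div_le_one_of_le₀ (sq_le_sq.1 (hz.trans (rad_sq x y).ge)) (abs_nonneg _)
  fin_cases i
  · simp [nullCovector]
  · exact abs_div_rad_le (by nlinarith)
  · exact abs_div_rad_le (by nlinarith)

/-- The radial derivative `∂_r u` at a point with spatial part `(x, y)`, in terms of the gradient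
`a` of `u`. -/
def radialForm (x y : ℝ) (a : Fin 3 → ℝ) : ℝ := nullCovector x y 1 * a 1 + nullCovector x y 2 * a 2

-- These express `t (∂_t + ∂_r) = X + (t - r) ∂_r` and that the angular derivative is `Ω / r`.
lemma mul_goodPart_nullCovector_one (t : ℝ) (hxy : (x, y) ≠ (0, 0)) (a : Fin 3 → ℝ) :
    t * goodPart 0 (nullCovector x y) a 1 =
      nullCovector x y 1 * (scalingForm t x y a + (t - rad x y) * radialForm x y a) +
        -nullCovector x y 2 * (t / rad x y * rotationForm x y a) := by
  have hr := (rad_pos hxy).ne'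
  simp only [goodPart, radialForm, scalingForm, rotationForm, nullCovector, Pi.add_apply,
    Pi.smul_apply, smul_eq_mul, Matrix.cons_val]
  field_simp
  linear_combination t * a 1 * rad_sq x y

lemma mul_goodPart_nullCovector_two (t : ℝ) (hxy : (x, y) ≠ (0, 0)) (a : Fin 3 → ℝ) :
    t * goodPart 0 (nullCovector x y) a 2 =
      nullCovector x y 2 * (scalingForm t x y a + (t - rad x y) * radialForm x y a) +
        nullCovector x y 1 * (t / rad x y * rotationForm x y a) := by
  have hr := (rad_pos hxy).ne'
  simp only [goodPart, radialForm, scalingForm, rotationForm, nullCovector, Pi.add_apply,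
    Pi.smul_apply, smul_eq_mul, Matrix.cons_val]
  field_simp
  linear_combination t * a 2 * rad_sq x y

lemma abs_radialForm_le (x y : ℝ) (a : Fin 3 → ℝ) : |radialForm x y a| ≤ 2 * ‖a‖ := by
  have component_le (i : Fin 3) : |nullCovector x y i * a i| ≤ ‖a‖ := by
    rw [abs_mul]
    exact (mul_le_of_le_one_left (abs_nonneg _) (abs_nullCovector_le_one x y i)).trans
      (norm_le_pi_norm a i)
  rw [radialForm, two_mul]
  exact (abs_add_le _ _).trans (add_le_add (component_le 1) (component_le 2))

lemma norm_goodPart_nullCovector_le (ht : 0 < t) (hxy : (x, y) ≠ (0, 0)) (htr : t ≤ 2 * rad x y)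
    (a : Fin 3 → ℝ) :
    ‖goodPart 0 (nullCovector x y) a‖ ≤
      (|scalingForm t x y a| + 2 * |rotationForm x y a| + 2 * (sm t x y * ‖a‖)) / t := by
  have hσ := sm_nonneg t x y
  have scaling_le : |scalingForm t x y a + (t - rad x y) * radialForm x y a| ≤
      |scalingForm t x y a| + sm t x y * (2 * ‖a‖) := by
    refine (abs_add_le _ _).trans (add_le_add_right ?_ _)
    rw [abs_mul]
    exact mul_le_mul (le_add_of_nonneg_left zero_le_one) (abs_radialForm_le x y a) (abs_nonneg _) hσ
  have rotation_le : |t / rad x y * rotationForm x y a| ≤ 2 * |rotationForm x y a| := by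
    rw [abs_mul, abs_of_pos (div_pos ht (rad_pos hxy))]
    gcongr
    exact (div_le_iff₀ (rad_pos hxy)).2 htr
  have combination_le {u v : ℝ} (hu : |u| ≤ 1) (hv : |v| ≤ 1) :
      |u * (scalingForm t x y a + (t - rad x y) * radialForm x y a) +
          v * (t / rad x y * rotationForm x y a)| ≤
        |scalingForm t x y a| + 2 * |rotationForm x y a| + 2 * (sm t x y * ‖a‖) := by
    refine (abs_add_le _ _).trans ?_
    rw [abs_mul u, abs_mul v]
    linarith [(mul_le_of_le_one_left (abs_nonneg _) hu).trans scaling_le,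
      (mul_le_of_le_one_left (abs_nonneg _) hv).trans rotation_le]
  have hω := abs_nullCovector_le_one x y
  refine (pi_norm_le_iff_of_nonneg (by positivity)).2 fun i => (le_div_iff₀' ht).2 ?_
  rw [norm_eq_abs, ← abs_of_pos ht, ← abs_mul, abs_of_pos ht]
  fin_cases i
  · have : goodPart 0 (nullCovector x y) a 0 = 0 := by simp [goodPart, nullCovector]
    simp only [Fin.zero_eta, this, mul_zero, abs_zero]
    positivity
  · exact (mul_goodPart_nullCovector_one t hxy a) ▸
      combination_le (hω 1) ((abs_neg _).trans_le (hω 2))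
  · exact (mul_goodPart_nullCovector_two t hxy a) ▸ combination_le (hω 2) (hω 1)

/-- The quantity that controls `t` times a null form in a gradient `a` and a Hessian `H`, whose row
`H k` is the gradient of the `k`-th partial derivative. -/
def nullFormMajorant (t x y : ℝ) (a : Fin 3 → ℝ) (H : Fin 3 → Fin 3 → ℝ) : ℝ :=
  ‖sm t x y • a‖ * ‖H‖ + (|scalingForm t x y a| + |rotationForm x y a|) * ‖H‖ +
    ‖a‖ * (‖fun k => scalingForm t x y (H k)‖ + ‖fun k => rotationForm x y (H k)‖)

/-- The cubic form with coefficients `g` vanishes on the null cone `p₀² = p₁² + p₂²`. -/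
def IsNullForm (g : Fin 3 → Fin 3 → Fin 3 → ℝ) : Prop :=
  ∀ p : Fin 3 → ℝ, p 0 ^ 2 = p 1 ^ 2 + p 2 ^ 2 → ∑ i, ∑ j, ∑ k, g i j k * p i * p j * p k = 0

variable {g : Fin 3 → Fin 3 → Fin 3 → ℝ} {H : Fin 3 → Fin 3 → ℝ}

lemma abs_nullForm_le_of_two_mul_rad_le (ht : 0 < t) (htr : 2 * rad x y ≤ t) (a : Fin 3 → ℝ) :
    |∑ i, ∑ j, ∑ k, g i j k * (a i * H k j)| ≤
      (∑ i, ∑ j, ∑ k, |g i j k|) * (6 / t * nullFormMajorant t x y a H) := by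
  refine abs_sum₃_mul_le g fun i j k => ?_
  have t_le : t ≤ 2 * sm t x y := by
    unfold sm
    linarith [le_abs_self (t - rad x y)]
  have product_le : |a i * H k j| ≤ ‖a‖ * ‖H‖ := by
    rw [abs_mul]
    gcongr
    exacts [norm_le_pi_norm a i, (norm_le_pi_norm (H k) j).trans (norm_le_pi_norm H k)]
  rw [div_mul_eq_mul_div, le_div_iff₀ ht]
  calc |a i * H k j| * t ≤ ‖a‖ * ‖H‖ * (2 * sm t x y) := by gcongr
    _ ≤ 6 * (sm t x y * ‖a‖ * ‖H‖) := by
      linarith [mul_nonneg (mul_nonneg (sm_nonneg t x y) (norm_nonneg a)) (norm_nonneg H)]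
    _ ≤ 6 * nullFormMajorant t x y a H := by
      rw [nullFormMajorant, norm_smul, norm_of_nonneg (sm_nonneg t x y), add_assoc]
      gcongr
      exact le_add_of_nonneg_right (by positivity)

lemma abs_goodPart_hessian_le (ht : 0 < t) (hxy : (x, y) ≠ (0, 0)) (htr : t ≤ 2 * rad x y)
    (k j : Fin 3) :
    |goodPart 0 (nullCovector x y) (H k) j| ≤
      (‖fun k => scalingForm t x y (H k)‖ + 2 * ‖fun k => rotationForm x y (H k)‖ +
        2 * (sm t x y * ‖H‖)) / t := by
  have hσ := sm_nonneg t x y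
  refine (norm_le_pi_norm (goodPart 0 (nullCovector x y) (H k)) j).trans
    ((norm_goodPart_nullCovector_le ht hxy htr (H k)).trans ?_)
  gcongr
  exacts [norm_le_pi_norm (fun k => scalingForm t x y (H k)) k,
    norm_le_pi_norm (fun k => rotationForm x y (H k)) k, norm_le_pi_norm H k]

lemma abs_nullForm_le_of_le_two_mul_rad (hnull : IsNullForm g) (ht : 0 < t)
    (hxy : (x, y) ≠ (0, 0)) (htr : t ≤ 2 * rad x y) (a : Fin 3 → ℝ) (hH : ∀ k, H k 0 = H 0 k) :
    |∑ i, ∑ j, ∑ k, g i j k * (a i * H k j)| ≤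
      (∑ i, ∑ j, ∑ k, |g i j k|) * (6 / t * nullFormMajorant t x y a H) := by
  set p := nullCovector x y
  have hp : ∀ i, |p i| ≤ 1 := abs_nullCovector_le_one x y
  have goodPart_le := norm_goodPart_nullCovector_le ht hxy htr a
  have goodPart_hessian_le := abs_goodPart_hessian_le (H := H) ht hxy htr
  set z := |scalingForm t x y a| + 2 * |rotationForm x y a| + 2 * (sm t x y * ‖a‖) with hz
  set w := ‖fun k => scalingForm t x y (H k)‖ + 2 * ‖fun k => rotationForm x y (H k)‖ +
    2 * (sm t x y * ‖H‖) with hw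
  rw [sum_nullForm_eq_sum_goodPart 0 p (hnull p (nullCovector_null hxy)) a hH]
  refine abs_sum₃_mul_le g fun i j k => ?_
  calc |goodPart 0 p a i * H k j - a 0 * p i * (goodPart 0 p (H k) j - p j * goodPart 0 p (H 0) k)|
      ≤ |goodPart 0 p a i| * |H k j| +
          |a 0| * |p i| * (|goodPart 0 p (H k) j| + |p j| * |goodPart 0 p (H 0) k|) := by
        simp only [← abs_mul]
        refine (abs_sub _ _).trans (add_le_add_right ?_ _)
        rw [abs_mul (a 0 * p i)]
        exact mul_le_mul_of_nonneg_left (abs_sub _ _) (abs_nonneg _)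
    _ ≤ z / t * ‖H‖ + ‖a‖ * 1 * (w / t + 1 * (w / t)) := by
        gcongr
        exacts [(norm_nonneg _).trans goodPart_le,
          (norm_le_pi_norm (goodPart 0 p a) i).trans goodPart_le,
          (norm_le_pi_norm (H k) j).trans (norm_le_pi_norm H k), norm_le_pi_norm a 0, hp i,
          goodPart_hessian_le k j, hp j, goodPart_hessian_le 0 k]
    _ = (z * ‖H‖ + 2 * (‖a‖ * w)) / t := by ring
    _ ≤ 6 * nullFormMajorant t x y a H / t := by
        gcongr
        rw [hz, hw, nullFormMajorant, norm_smul, norm_of_nonneg (sm_nonneg t x y)]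
        linarith [mul_nonneg (abs_nonneg (scalingForm t x y a)) (norm_nonneg H),
          mul_nonneg (abs_nonneg (rotationForm x y a)) (norm_nonneg H),
          mul_nonneg (norm_nonneg a) (norm_nonneg fun k => scalingForm t x y (H k)),
          mul_nonneg (norm_nonneg a) (norm_nonneg fun k => rotationForm x y (H k))]
    _ = 6 / t * nullFormMajorant t x y a H := by ring

lemma abs_nullForm_le (hnull : IsNullForm g) (ht : 0 < t) (hxy : (x, y) ≠ (0, 0))
    (a : Fin 3 → ℝ) (hH : ∀ k, H k 0 = H 0 k) :
    |∑ i, ∑ j, ∑ k, g i j k * (a i * H k j)| ≤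
      (∑ i, ∑ j, ∑ k, |g i j k|) * (6 / t * nullFormMajorant t x y a H) := by
  rcases le_total t (2 * rad x y) with near_cone | off_cone
  · exact abs_nullForm_le_of_le_two_mul_rad hnull ht hxy near_cone a hH
  · exact abs_nullForm_le_of_two_mul_rad_le ht off_cone a

end NullForm

/-! ### Derivations of space-time -/

section Spacetime

open SmoothFun

/-- The domain `(0, ∞) × (ℝ² ∖ {0})`, with points written `(t, x, y)`. -/
def region : Opens (ℝ × ℝ × ℝ) where
  carrier := {p : ℝ × ℝ × ℝ | 0 < p.1 ∧ (p.2.1, p.2.2) ≠ ((0 : ℝ), (0 : ℝ))}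
  is_open' := (isOpen_lt continuous_const continuous_fst).inter
    (isOpen_ne_fun continuous_snd continuous_const)

/-- The standard basis of `ℝ × ℝ × ℝ`. -/
def stdVec : Fin 3 → ℝ × ℝ × ℝ := ![(1, 0, 0), (0, 1, 0), (0, 0, 1)]

/-- The infinitesimal rotation of the space variables. -/
def rotationMap : ℝ × ℝ × ℝ →L[ℝ] ℝ × ℝ × ℝ :=
  ContinuousLinearMap.prod 0 (ContinuousLinearMap.prod
    (-(ContinuousLinearMap.snd ℝ ℝ ℝ ∘L ContinuousLinearMap.snd ℝ ℝ (ℝ × ℝ)))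
    (ContinuousLinearMap.fst ℝ ℝ ℝ ∘L ContinuousLinearMap.snd ℝ ℝ (ℝ × ℝ)))

/-- The partial derivatives `∂_i` as operators on the smooth functions on `region`. -/
def partialD (i : Fin 3) : Module.End ℝ (SmoothFun region) := constDeriv region (stdVec i)

/-- The scaling field `X` as an operator on the smooth functions on `region`. -/
def scalingD : Module.End ℝ (SmoothFun region) := linDeriv region 1

/-- The rotation field `Ω` as an operator on the smooth functions on `region`. -/
def rotationD : Module.End ℝ (SmoothFun region) := linDeriv region rotationMap

/-- The family `Γ = (∂_t, ∂_1, ∂_2, X)` as operators on the smooth functions on `region`. -/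
def fieldD : Fin 4 → Module.End ℝ (SmoothFun region) :=
  ![partialD 0, partialD 1, partialD 2, scalingD]

lemma eq_sum_stdVec (v : ℝ × ℝ × ℝ) :
    v = v.1 • stdVec 0 + v.2.1 • stdVec 1 + v.2.2 • stdVec 2 := by
  simp [stdVec]

lemma fieldD_eq_partialD_or_scalingD (a : Fin 4) :
    (∃ i, fieldD a = partialD i) ∨ fieldD a = scalingD := by
  fin_cases a
  exacts [.inl ⟨0, rfl⟩, .inl ⟨1, rfl⟩, .inl ⟨2, rfl⟩, .inr rfl]

lemma constDeriv_mem_span_partialD (v : ℝ × ℝ × ℝ) :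
    constDeriv region v ∈ span ℝ (range partialD) := by
  have partial_mem (c : ℝ) (i : Fin 3) : c • partialD i ∈ span ℝ (range partialD) :=
    smul_mem _ c (subset_span (mem_range_self i))
  rw [eq_sum_stdVec v]
  simp only [map_add, map_smul]
  exact add_mem (add_mem (partial_mem v.1 0) (partial_mem v.2.1 1)) (partial_mem v.2.2 2)

lemma lie_partialD_partialD (i j : Fin 3) : ⁅partialD i, partialD j⁆ = 0 :=
  lie_constDeriv_constDeriv _ _

lemma lie_partialD_scalingD (i : Fin 3) : ⁅partialD i, scalingD⁆ = partialD i :=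
  lie_constDeriv_linDeriv _ _

lemma lie_rotationD_partialD_mem (i : Fin 3) :
    ⁅rotationD, partialD i⁆ ∈ span ℝ (range partialD) := by
  have bracket_eq : ⁅rotationD, partialD i⁆ = -constDeriv region (rotationMap (stdVec i)) := by
    rw [← lie_constDeriv_linDeriv, Ring.lie_def, Ring.lie_def, neg_sub]
    rfl
  rw [bracket_eq]
  exact neg_mem (constDeriv_mem_span_partialD _)

lemma lie_rotationD_scalingD : ⁅rotationD, scalingD⁆ = 0 :=
  lie_linDeriv_linDeriv_of_commute (Commute.one_right _)

lemma range_partialD_subset : range partialD ⊆ range fieldD := by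
  rintro _ ⟨i, rfl⟩
  exact ⟨i.castSucc, by fin_cases i <;> rfl⟩

lemma lie_partialD_fieldD_mem (i : Fin 3) (a : Fin 4) :
    ⁅partialD i, fieldD a⁆ ∈ span ℝ (range partialD) := by
  rcases fieldD_eq_partialD_or_scalingD a with ⟨j, ha⟩ | ha <;> rw [ha]
  · exact lie_partialD_partialD i j ▸ zero_mem _
  · rw [lie_partialD_scalingD]
    exact subset_span (mem_range_self i)

lemma lie_rotationD_fieldD_mem (a : Fin 4) : ⁅rotationD, fieldD a⁆ ∈ span ℝ (range partialD) := by
  rcases fieldD_eq_partialD_or_scalingD a with ⟨j, ha⟩ | ha <;> rw [ha]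
  · exact lie_rotationD_partialD_mem j
  · exact lie_rotationD_scalingD ▸ zero_mem _

lemma scalingForm_partialD {p : ℝ × ℝ × ℝ} (hp : p ∈ region) (F : SmoothFun region) :
    scalingForm p.1 p.2.1 p.2.2 (fun i => (partialD i F).1 p) = (scalingD F).1 p := by
  have expand : (1 : ℝ × ℝ × ℝ →L[ℝ] ℝ × ℝ × ℝ) p =
      p.1 • stdVec 0 + p.2.1 • stdVec 1 + p.2.2 • stdVec 2 := eq_sum_stdVec p
  simp only [scalingForm, partialD, scalingD, constDeriv_apply _ _ hp, linDeriv_apply _ _ hp,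
    expand, map_add, map_smul, smul_eq_mul]

lemma rotationForm_partialD {p : ℝ × ℝ × ℝ} (hp : p ∈ region) (F : SmoothFun region) :
    rotationForm p.2.1 p.2.2 (fun i => (partialD i F).1 p) = (rotationD F).1 p := by
  have expand : rotationMap p = p.2.1 • stdVec 2 - p.2.2 • stdVec 1 := by
    simp [rotationMap, stdVec]
  simp only [rotationForm, partialD, rotationD, constDeriv_apply _ _ hp, linDeriv_apply _ _ hp,
    expand, map_sub, map_smul, smul_eq_mul]

/-- The function `F` on `region` is the uncurried form of the function `f` of three variables. -/
def Represents (F : SmoothFun region) (f : F3) : Prop :=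
  ∀ p ∈ region, f p.1 p.2.1 p.2.2 = F.1 p

namespace Represents

variable {F : SmoothFun region} {f : F3}

lemma deriv_comp (h : Represents F f) {γ : ℝ → ℝ × ℝ × ℝ} {v : ℝ × ℝ × ℝ} {s : ℝ}
    (hγ : HasDerivAt γ v s) (hs : γ s ∈ region) :
    deriv (fun u => f (γ u).1 (γ u).2.1 (γ u).2.2) s = fderiv ℝ F.1 (γ s) v := by
  have eventually_mem : ∀ᶠ u in nhds s, γ u ∈ region :=
    hγ.continuousAt (region.isOpen.mem_nhds hs)
  exact (((F.differentiableAt hs).hasFDerivAt.comp_hasDerivAt s hγ).congr_of_eventuallyEq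
    (eventually_mem.mono fun u hu => h _ hu)).deriv

lemma pdi (h : Represents F f) (i : Fin 3) : Represents (partialD i F) (pdi i f) := by
  intro p hp
  rw [partialD, constDeriv_apply _ _ hp]
  have hconst (c : ℝ) (s : ℝ) := hasDerivAt_const s c
  fin_cases i
  · exact h.deriv_comp ((hasDerivAt_id p.1).prodMk ((hconst p.2.1 _).prodMk (hconst p.2.2 _))) hp
  · exact h.deriv_comp ((hconst p.1 _).prodMk ((hasDerivAt_id p.2.1).prodMk (hconst p.2.2 _))) hp
  · exact h.deriv_comp ((hconst p.1 _).prodMk ((hconst p.2.1 _).prodMk (hasDerivAt_id p.2.2))) hp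

lemma xf (h : Represents F f) : Represents (scalingD F) (Xf f) := by
  intro p hp
  rw [← scalingForm_partialD hp, scalingForm, ← h.pdi 0 p hp, ← h.pdi 1 p hp, ← h.pdi 2 p hp]
  rfl

lemma gammaF (h : Represents F f) (a : Fin 4) : Represents (fieldD a F) (GammaF a f) := by
  fin_cases a
  exacts [h.pdi 0, h.pdi 1, h.pdi 2, h.xf]

lemma gIter (h : Represents F f) (w : List (Fin 4)) :
    Represents (wordProd fieldD w F) (GIter w f) := by
  induction w with
  | nil => exact h
  | cons a w ih =>
    rw [wordProd_cons]
    exact ih.gammaF a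

lemma rotationD_eq_zero (h : Represents F f) (hf : RadialF f) : rotationD F = 0 := by
  ext ⟨t, x, y⟩ hp
  let orbit (s : ℝ) : ℝ × ℝ × ℝ := (t, x * cos s - y * sin s, x * sin s + y * cos s)
  have orbit_zero : orbit 0 = (t, x, y) := by simp [orbit]
  have hasDerivAt_orbit : HasDerivAt orbit (rotationMap (t, x, y)) 0 := by
    have hcos := hasDerivAt_cos 0
    have hsin := hasDerivAt_sin 0
    refine ((hasDerivAt_const 0 t).prodMk (((hcos.const_mul x).sub (hsin.const_mul y)).prodMk
      ((hsin.const_mul x).add (hcos.const_mul y)))).congr_deriv ?_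
    simp [rotationMap]
  have constant_on_orbit (s : ℝ) : f (orbit s).1 (orbit s).2.1 (orbit s).2.2 = f t x y := by
    refine hf _ _ _ _ _ (congrArg sqrt ?_)
    linear_combination (x ^ 2 + y ^ 2) * sin_sq_add_cos_sq s
  have along_orbit := h.deriv_comp hasDerivAt_orbit (orbit_zero ▸ hp)
  simp only [constant_on_orbit, deriv_const, orbit_zero] at along_orbit
  rw [rotationD, linDeriv_apply _ _ hp, ← along_orbit]
  rfl

end Represents

end Spacetime

/-! ### The null form estimate -/

section Estimate

/-- A function `f` on `region` together with a point `p = (t, x, y)` at which it is evaluated. -/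
abbrev Jet : Type := SmoothFun region × ℝ × ℝ × ℝ

variable {n : ℕ} {T : Module.End ℝ (SmoothFun region)} {l : Filter Jet}

/-- The pairs `(f, p)` of a rotation-invariant function and a point of `region`. The estimate is a
statement about asymptotic domination along the principal filter of this set. -/
def radialJets : Set Jet := {q | rotationD q.1 = 0 ∧ q.2 ∈ region}

/-- The gradient of `T f` at `p`, for `q = (f, p)`. -/
def gradAt (T : Module.End ℝ (SmoothFun region)) (q : Jet) : Fin 3 → ℝ :=
  fun i => evalAt q (partialD i * T)

/-- The Hessian of `T f` at `p`, for `q = (f, p)`; its row `k` is the gradient of `∂_k T f`. -/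
def hessAt (T : Module.End ℝ (SmoothFun region)) (q : Jet) : Fin 3 → Fin 3 → ℝ :=
  fun k => gradAt (partialD k * T) q

/-- `|Γ^w f|` at `p`, for `q = (f, p)`. -/
def absField (q : Jet) (w : List (Fin 4)) : ℝ :=
  |evalAt q (wordProd fieldD w)|

/-- `|Γ^w ∂f|` at `p`, for `q = (f, p)`. -/
def absFieldGrad (q : Jet) (w : List (Fin 4)) : ℝ :=
  ⨆ i, |evalAt q (wordProd fieldD w * partialD i)|

/-- `|∂Γ^w ∂f|` at `p`, for `q = (f, p)`. -/
def absGradFieldGrad (q : Jet) (w : List (Fin 4)) : ℝ :=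
  ⨆ v : Fin 3 × Fin 3, |evalAt q (partialD v.1 * (wordProd fieldD w * partialD v.2))|

lemma absField_nonneg (q : Jet) (w : List (Fin 4)) : 0 ≤ absField q w :=
  abs_nonneg _

lemma absFieldGrad_nonneg (q : Jet) (w : List (Fin 4)) :
    0 ≤ absFieldGrad q w :=
  Real.iSup_nonneg fun _ => abs_nonneg _

lemma absGradFieldGrad_nonneg (q : Jet) (w : List (Fin 4)) :
    0 ≤ absGradFieldGrad q w :=
  Real.iSup_nonneg fun _ => abs_nonneg _

lemma abs_evalAt_wordProd_mul_le {b : Module.End ℝ (SmoothFun region)} (hb : b ∈ range partialD)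
    (q : Jet) (w : List (Fin 4)) :
    |evalAt q (wordProd fieldD w * b)| ≤ absFieldGrad q w := by
  obtain ⟨i, rfl⟩ := hb
  exact le_ciSup (f := fun i => |evalAt q (wordProd fieldD w * partialD i)|)
    (finite_range _).bddAbove i

lemma isBigO_evalAt_absFieldGrad
    (hT : T ∈ letterSpan ℝ fieldD ^ n * span ℝ (range partialD)) :
    (fun q => evalAt q T) =O[l] fun q => wordSum n (absFieldGrad q) :=
  isBigO_wordSum_of_mem absFieldGrad_nonneg
    (fun q w _ hb => abs_evalAt_wordProd_mul_le hb q w) hT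

lemma isBigO_gradAt_absGradFieldGrad
    (hT : T ∈ letterSpan ℝ fieldD ^ n * span ℝ (range partialD)) :
    gradAt T =O[l] fun q => wordSum n (absGradFieldGrad q) := by
  refine isBigO_pi.2 fun j => isBigO_wordSum_of_mem absGradFieldGrad_nonneg
    (ev := fun q => evalAt q ∘ₗ LinearMap.mulLeft ℝ (partialD j)) ?_ hT
  rintro q w _ ⟨k, rfl⟩
  exact le_ciSup
    (f := fun v : Fin 3 × Fin 3 => |evalAt q (partialD v.1 * (wordProd fieldD w * partialD v.2))|)
    (finite_range _).bddAbove (j, k)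

lemma evalAt_eq_zero_of_mem_radialJets {q : Jet} (hq : q ∈ radialJets) :
    ∀ S ∈ (⊤ : Submodule ℝ _) * span ℝ {rotationD}, evalAt q S = 0 :=
  fun _ => evalAt_eq_zero_of_mem_top_mul_span hq.1

lemma isBigO_evalAt_absFieldGrad_of_mem_sup
    (hT : T ∈ letterSpan ℝ fieldD ^ n * span ℝ (range partialD) ⊔ ⊤ * span ℝ {rotationD}) :
    (fun q => evalAt q T) =O[𝓟 radialJets] fun q => wordSum n (absFieldGrad q) :=
  isBigO_wordSum_of_mem_sup absFieldGrad_nonneg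
    (fun q w _ hb => abs_evalAt_wordProd_mul_le hb q w)
    (Filter.eventually_principal.2 fun _ hq => evalAt_eq_zero_of_mem_radialJets hq) hT

lemma isBigO_evalAt_absField_of_mem_sup
    (hT : T ∈ letterSpan ℝ fieldD ^ n ⊔ ⊤ * span ℝ {rotationD}) :
    (fun q => evalAt q T) =O[𝓟 radialJets] fun q => wordSum n (absField q) := by
  refine isBigO_wordSum_of_mem_sup (s := {1}) absField_nonneg
    (fun q w b hb => ?_)
    (Filter.eventually_principal.2 fun _ hq => evalAt_eq_zero_of_mem_radialJets hq)
    (by rwa [← one_eq_span, mul_one])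
  rw [mem_singleton_iff.1 hb, mul_one]
  rfl

variable (w : List (Fin 4))

lemma isBigO_gradAt_wordProd :
    gradAt (wordProd fieldD w) =O[l] fun q => wordSum w.length (absFieldGrad q) :=
  isBigO_pi.2 fun i => isBigO_evalAt_absFieldGrad (mul_wordProd_mem lie_partialD_fieldD_mem i w)

lemma isBigO_hessAt_wordProd :
    hessAt (wordProd fieldD w) =O[l] fun q => wordSum w.length (absGradFieldGrad q) :=
  isBigO_pi.2 fun k =>
    isBigO_gradAt_absGradFieldGrad (mul_wordProd_mem lie_partialD_fieldD_mem k w)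

lemma isBigO_scalingForm_gradAt :
    (fun q => scalingForm q.2.1 q.2.2.1 q.2.2.2 (gradAt (wordProd fieldD w) q)) =O[𝓟 radialJets]
      fun q => wordSum (w.length + 1) (absField q) := by
  have mem : fieldD 3 * wordProd fieldD w ∈ letterSpan ℝ fieldD ^ (w.length + 1) :=
    wordProd_cons fieldD 3 w ▸ wordProd_mem_letterSpan_pow le_rfl
  refine (isBigO_evalAt_absField_of_mem_sup (mem_sup_left mem)).congr' ?_ .rfl
  exact Filter.eventually_principal.2 fun q hq => (scalingForm_partialD hq.2 _).symm

lemma isBigO_rotationForm_gradAt :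
    (fun q => rotationForm q.2.2.1 q.2.2.2 (gradAt (wordProd fieldD w) q)) =O[𝓟 radialJets]
      fun q => wordSum (w.length + 1) (absField q) := by
  refine (isBigO_evalAt_absField_of_mem_sup (mul_wordProd_mem_sup range_partialD_subset
    lie_partialD_fieldD_mem lie_rotationD_fieldD_mem w)).congr' ?_ .rfl
  exact Filter.eventually_principal.2 fun q hq => (rotationForm_partialD hq.2 _).symm

lemma isBigO_scalingForm_hessAt :
    (fun q k => scalingForm q.2.1 q.2.2.1 q.2.2.2 (hessAt (wordProd fieldD w) q k))
      =O[𝓟 radialJets] fun q => wordSum (w.length + 1) (absFieldGrad q) := by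
  refine isBigO_pi.2 fun k => (isBigO_evalAt_absFieldGrad
    (letter_mul_mul_wordProd_mem lie_partialD_fieldD_mem 3 k w)).congr' ?_ .rfl
  exact Filter.eventually_principal.2 fun q hq => (scalingForm_partialD hq.2 _).symm

lemma isBigO_rotationForm_hessAt :
    (fun q k => rotationForm q.2.2.1 q.2.2.2 (hessAt (wordProd fieldD w) q k))
      =O[𝓟 radialJets] fun q => wordSum (w.length + 1) (absFieldGrad q) := by
  refine isBigO_pi.2 fun k => (isBigO_evalAt_absFieldGrad_of_mem_sup
    (mul_mul_wordProd_mem_sup range_partialD_subset lie_partialD_fieldD_mem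
      lie_rotationD_fieldD_mem k w)).congr' ?_ .rfl
  exact Filter.eventually_principal.2 fun q hq => (rotationForm_partialD hq.2 _).symm

lemma isBigO_add_of_nonneg {X : Type*} {l : Filter X} {f₁ f₂ g₁ g₂ : X → ℝ} (h₁ : f₁ =O[l] g₁)
    (h₂ : f₂ =O[l] g₂) (hg₁ : 0 ≤ g₁) (hg₂ : 0 ≤ g₂) : (f₁ + f₂) =O[l] (g₁ + g₂) :=
  (h₁.add_add h₂).congr_right fun x => by
    rw [norm_of_nonneg (hg₁ x), norm_of_nonneg (hg₂ x), Pi.add_apply]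

/-- The right-hand side of the null form estimate without its factor `C / t`. -/
def decayMajorant (n m : ℕ) (q : Jet) : ℝ :=
  sm q.2.1 q.2.2.1 q.2.2.2 * wordSum n (absFieldGrad q) * wordSum m (absGradFieldGrad q) +
    wordSum (n + 1) (absField q) * wordSum m (absGradFieldGrad q) +
    wordSum n (absFieldGrad q) * wordSum (m + 1) (absFieldGrad q)

lemma sm_mul_absFieldGrad_mul_absGradFieldGrad_nonneg (n m : ℕ) (q : Jet) :
    0 ≤ sm q.2.1 q.2.2.1 q.2.2.2 * wordSum n (absFieldGrad q) * wordSum m (absGradFieldGrad q) :=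
  mul_nonneg (mul_nonneg (sm_nonneg _ _ _) (wordSum_nonneg n (absFieldGrad_nonneg q)))
    (wordSum_nonneg m (absGradFieldGrad_nonneg q))

lemma absField_mul_absGradFieldGrad_nonneg (n m : ℕ) (q : Jet) :
    0 ≤ wordSum n (absField q) * wordSum m (absGradFieldGrad q) :=
  mul_nonneg (wordSum_nonneg n (absField_nonneg q)) (wordSum_nonneg m (absGradFieldGrad_nonneg q))

lemma absFieldGrad_mul_absFieldGrad_nonneg (n m : ℕ) (q : Jet) :
    0 ≤ wordSum n (absFieldGrad q) * wordSum m (absFieldGrad q) :=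
  mul_nonneg (wordSum_nonneg n (absFieldGrad_nonneg q)) (wordSum_nonneg m (absFieldGrad_nonneg q))

lemma decayMajorant_nonneg (n m : ℕ) (q : Jet) : 0 ≤ decayMajorant n m q :=
  add_nonneg (add_nonneg (sm_mul_absFieldGrad_mul_absGradFieldGrad_nonneg _ _ q)
    (absField_mul_absGradFieldGrad_nonneg _ _ q))
    (absFieldGrad_mul_absFieldGrad_nonneg _ _ q)

lemma isBigO_nullFormMajorant (v w : List (Fin 4)) :
    (fun q => nullFormMajorant q.2.1 q.2.2.1 q.2.2.2 (gradAt (wordProd fieldD v) q)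
      (hessAt (wordProd fieldD w) q)) =O[𝓟 radialJets] decayMajorant v.length w.length := by
  have weighted := ((isBigO_refl (fun q => sm q.2.1 q.2.2.1 q.2.2.2) (𝓟 radialJets)).smul
    (isBigO_gradAt_wordProd v)).norm_left.mul (isBigO_hessAt_wordProd w).norm_left
  have tangential_grad := ((isBigO_scalingForm_gradAt v).norm_left.add
    (isBigO_rotationForm_gradAt v).norm_left).mul (isBigO_hessAt_wordProd w).norm_left
  have tangential_hess := (isBigO_gradAt_wordProd v).norm_left.mul
    ((isBigO_scalingForm_hessAt w).norm_left.add (isBigO_rotationForm_hessAt w).norm_left)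
  have hσ₁₂ := sm_mul_absFieldGrad_mul_absGradFieldGrad_nonneg v.length w.length
  have h₀₂ := absField_mul_absGradFieldGrad_nonneg (v.length + 1) w.length
  exact isBigO_add_of_nonneg
    (isBigO_add_of_nonneg weighted tangential_grad hσ₁₂ h₀₂) tangential_hess (add_nonneg hσ₁₂ h₀₂)
    (absFieldGrad_mul_absFieldGrad_nonneg _ _)

lemma hessAt_symm (T : Module.End ℝ (SmoothFun region)) (q : Jet)
    (j k : Fin 3) : hessAt T q k j = hessAt T q j k := by
  have partialD_comm : partialD j * partialD k = partialD k * partialD j :=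
    sub_eq_zero.1 (lie_partialD_partialD j k)
  simp only [hessAt, gradAt, ← mul_assoc, partialD_comm]

lemma isBigO_nullForm {g : Fin 3 → Fin 3 → Fin 3 → ℝ} (hnull : IsNullForm g) (v w : List (Fin 4)) :
    (fun q => ∑ i, ∑ j, ∑ k,
      g i j k * (gradAt (wordProd fieldD v) q i * hessAt (wordProd fieldD w) q k j))
      =O[𝓟 radialJets] fun q => q.2.1⁻¹ * decayMajorant v.length w.length q := by
  refine IsBigO.trans (.of_bound ((∑ i, ∑ j, ∑ k, |g i j k|) * 6) ?_)
    ((isBigO_refl (fun q : Jet => q.2.1⁻¹) _).mul (isBigO_nullFormMajorant v w))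
  refine Filter.eventually_principal.2 fun q hq => (abs_nullForm_le hnull hq.2.1 hq.2.2 _
    fun k => hessAt_symm _ q 0 k).trans ?_
  rw [mul_assoc, div_eq_mul_inv, mul_assoc 6]
  gcongr
  exact le_abs_self _

lemma iSup_abs_mul_iSup_abs {ι ι' : Type*} [Finite ι] [Finite ι'] (h : ι → ℝ) (k : ι' → ℝ) :
    (⨆ i, |h i|) * ⨆ j, |k j| = ⨆ u : ι × ι', |h u.1 * k u.2| :=
  (Real.iSup_fun_mul_eq_iSup_mul_iSup_of_nonneg AbsoluteValue.abs h k).symm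

lemma abs_mul_iSup_abs {ι : Type*} (c : ℝ) (h : ι → ℝ) :
    |c| * ⨆ i, |h i| = ⨆ i, |c * h i| := by
  simp only [Real.mul_iSup_of_nonneg (abs_nonneg c), abs_mul]

lemma decayMajorant_eq (n m : ℕ) (q : Jet) :
    decayMajorant n m q =
      wordSum₂ n m (fun v w => ⨆ u : Fin 3 × Fin 3 × Fin 3,
        |sm q.2.1 q.2.2.1 q.2.2.2 * evalAt q (wordProd fieldD v * partialD u.1) *
          evalAt q (partialD u.2.1 * (wordProd fieldD w * partialD u.2.2))|) +
      wordSum₂ (n + 1) m (fun v w => ⨆ u : Fin 3 × Fin 3,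
        |evalAt q (wordProd fieldD v) *
          evalAt q (partialD u.1 * (wordProd fieldD w * partialD u.2))|) +
      wordSum₂ n (m + 1) (fun v w => ⨆ u : Fin 3 × Fin 3,
        |evalAt q (wordProd fieldD v * partialD u.1) *
          evalAt q (wordProd fieldD w * partialD u.2)|) := by
  have sm_mul_eq (v : List (Fin 4)) : sm q.2.1 q.2.2.1 q.2.2.2 * absFieldGrad q v =
      ⨆ i, |sm q.2.1 q.2.2.1 q.2.2.2 * evalAt q (wordProd fieldD v * partialD i)| := by
    rw [← abs_mul_iSup_abs, abs_of_nonneg (sm_nonneg _ _ _)]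
    rfl
  rw [decayMajorant, mul_wordSum (sm q.2.1 q.2.2.1 q.2.2.2)]
  simp only [sm_mul_eq, wordSum_mul_wordSum]
  simp only [absField, absFieldGrad, absGradFieldGrad, iSup_abs_mul_iSup_abs, abs_mul_iSup_abs]

end Estimate

/-- **Null form estimate with decay for radial functions** ((3.10)): for a cubic null
form `g` and a radially symmetric `φ̇`,
`|Σ g_i^{jk} ∂_iΓ^αφ̇ ∂²_{jk}Γ^βφ̇| ≤ (C/t)(Σ|σ₋Γ^p∂φ̇ ∂Γ^q∂φ̇| + Σ|Γ^pφ̇ ∂Γ^q∂φ̇|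
+ Σ|Γ^p∂φ̇ Γ^q∂φ̇|)` with the indicated ranges of `p, q`. -/
theorem null_form_radial_decay (g : Fin 3 → Fin 3 → Fin 3 → ℝ)
    (hsym : ∀ i j k, g i j k = g i k j)
    (hnull : ∀ p : Fin 3 → ℝ, (p 0) ^ 2 = (p 1) ^ 2 + (p 2) ^ 2 →
      ∑ i, ∑ j, ∑ k, g i j k * p i * p j * p k = 0)
    (α β : List (Fin 4)) :
    ∃ C > 0, ∀ φ : F3,
      ContDiffOn ℝ (⊤ : ℕ∞) (fun p : ℝ × ℝ × ℝ => φ p.1 p.2.1 p.2.2)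
        {p : ℝ × ℝ × ℝ | 0 < p.1 ∧ (p.2.1, p.2.2) ≠ ((0 : ℝ), (0 : ℝ))} →
      RadialF φ →
      ∀ t x y : ℝ, 0 < t → (x, y) ≠ ((0 : ℝ), (0 : ℝ)) →
        |∑ i, ∑ j, ∑ k,
            g i j k * pdi i (GIter α φ) t x y * pdi j (pdi k (GIter β φ)) t x y|
          ≤ C / t *
            ((∑ b ∈ Finset.range (α.length + 1), ∑ c ∈ Finset.range (β.length + 1),
              ∑ wp : Fin b → Fin 4, ∑ wq : Fin c → Fin 4,
                ⨆ v : Fin 3 × Fin 3 × Fin 3,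
                  |sm t x y * GIter (List.ofFn wp) (pdi v.1 φ) t x y *
                    pdi v.2.1 (GIter (List.ofFn wq) (pdi v.2.2 φ)) t x y|)
            + (∑ b ∈ Finset.range (α.length + 2), ∑ c ∈ Finset.range (β.length + 1),
              ∑ wp : Fin b → Fin 4, ∑ wq : Fin c → Fin 4,
                ⨆ v : Fin 3 × Fin 3,
                  |GIter (List.ofFn wp) φ t x y *
                    pdi v.1 (GIter (List.ofFn wq) (pdi v.2 φ)) t x y|)
            + (∑ b ∈ Finset.range (α.length + 1), ∑ c ∈ Finset.range (β.length + 2),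
              ∑ wp : Fin b → Fin 4, ∑ wq : Fin c → Fin 4,
                ⨆ v : Fin 3 × Fin 3,
                  |GIter (List.ofFn wp) (pdi v.1 φ) t x y *
                    GIter (List.ofFn wq) (pdi v.2 φ) t x y|)) := by
  obtain ⟨C, hC, hbound⟩ := (isBigO_nullForm hnull α β).exists_pos
  refine ⟨C, hC, fun φ hφ hrad t x y ht hxy => ?_⟩
  set F : SmoothFun region := SmoothFun.restrict _ hφ
  have hp : (t, x, y) ∈ region := ⟨ht, hxy⟩
  have hF : Represents F φ := fun p hp => (SmoothFun.restrict_apply hφ hp).symm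
  have hjet : (F, t, x, y) ∈ radialJets := ⟨hF.rotationD_eq_zero hrad, hp⟩
  have bound := isBigOWith_principal.1 hbound _ hjet
  rw [norm_of_nonneg (mul_nonneg (inv_nonneg.2 ht.le) (decayMajorant_nonneg _ _ _)), ← mul_assoc,
    ← div_eq_mul_inv, decayMajorant_eq] at bound
  simp only [mul_assoc] at bound ⊢
  have gIter_eq (w) : GIter w φ t x y = _ := hF.gIter w _ hp
  have gIter_pdi_eq (w i) : GIter w (pdi i φ) t x y = _ := (hF.pdi i).gIter w _ hp
  have pdi_gIter_eq (i w) : pdi i (GIter w φ) t x y = _ := (hF.gIter w).pdi i _ hp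
  have pdi_pdi_gIter_eq (j k w) : pdi j (pdi k (GIter w φ)) t x y = _ :=
    ((hF.gIter w).pdi k).pdi j _ hp
  have pdi_gIter_pdi_eq (j w k) : pdi j (GIter w (pdi k φ)) t x y = _ :=
    ((hF.pdi k).gIter w).pdi j _ hp
  simp only [gIter_eq, gIter_pdi_eq, pdi_gIter_eq, pdi_pdi_gIter_eq, pdi_gIter_pdi_eq]
  exact bound

end
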